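/- arXiv:2410.14421 — 5 statements merged into one kernel-verified Lean document; each statement's English description precedes it below -/
import Mathlib

section
/- Let the agents have additive binary graphical valuations represented by a multigraph on the agent set, and let X be an orientation. If the envy graph of X contains a directed path (i_0, i_1, …, i_d) of length d from agent i_0 to agent i_d, then v_{i_d}(X_{i_d}) ≥ v_{i_0}(X_{i_0}) + d. -/
/-!
In an orientation of binary-valued items, each agent `i` values her own bundle at exactly
`|X i|`, while any agent values any bundle `S` at no more than `|S|`. If `i` envies `j`, then
`|X i| = v_i (X i) < v_i (X j) ≤ |X j|`, so the integer `|X j|` is at least `|X i| + 1`: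
bundle sizes grow by at least one along each edge of the envy graph, hence by at least `d` along
a path of length `d`. Sizes being own-values, this is the claim.
-/

open Finset

/-- `X` is an allocation: a partition of the item set among the `n` agents. -/
def IsPartition {G : Type*} {n : ℕ} (X : Fin n → Finset G) : Prop :=
  ∀ g : G, ∃! i : Fin n, g ∈ X i

/-- The additive valuation of agent `i` induced by the item values `w i`. -/
def valFn {G : Type*} {n : ℕ} (w : Fin n → G → ℝ) (i : Fin n) (S : Finset G) : ℝ :=
  ∑ g ∈ S, w i g

/-- `X` is an orientation: every item is allocated to an agent valuing it positively. -/
def IsOrientation {G : Type*} {n : ℕ} (w : Fin n → G → ℝ) (X : Fin n → Finset G) : Prop :=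
  ∀ i, ∀ g ∈ X i, 0 < w i g

/-- Agent `i` EF1-envies agent `j` in allocation `X` (valuations `v i`): `i` envies `j`,
and the envy persists after removing any single item from `j`'s bundle. -/
def EF1Envies {G : Type*} [DecidableEq G] {n : ℕ} (v : Fin n → Finset G → ℝ)
    (X : Fin n → Finset G) (i j : Fin n) : Prop :=
  v i (X i) < v i (X j) ∧ ∀ g ∈ X j, v i (X i) < v i ((X j).erase g)

/-- `X` is near-EF1: every agent other than `a1` is EF1-happy. -/
def NearEF1 {G : Type*} [DecidableEq G] {n : ℕ} (v : Fin n → Finset G → ℝ)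
    (X : Fin n → Finset G) (a1 : Fin n) : Prop :=
  ∀ i, i ≠ a1 → ∀ j, ¬ EF1Envies v X i j

/-- `X` is an EF1 allocation: every agent is EF1-happy. -/
def IsEF1 {G : Type*} [DecidableEq G] {n : ℕ} (v : Fin n → Finset G → ℝ)
    (X : Fin n → Finset G) : Prop :=
  ∀ i j, ¬ EF1Envies v X i j

/-- The amount of EF1-envy of agent `i` towards agent `j` in `X`:
`min_{g ∈ X j} (v i (X j \ {g}) - v i (X i))`. -/
noncomputable def eps {G : Type*} [DecidableEq G] {n : ℕ} (v : Fin n → Finset G → ℝ)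
    (X : Fin n → Finset G) (i j : Fin n) : ℝ :=
  (if h : (X j).Nonempty then (X j).inf' h (fun g => v i ((X j).erase g)) else v i ∅)
    - v i (X i)

/-- `Y` is obtained from `X` by moving the single item `g` from agent `src` to agent `dst`. -/
def TransferStep {G : Type*} [DecidableEq G] {n : ℕ} (X Y : Fin n → Finset G)
    (src dst : Fin n) (g : G) : Prop :=
  src ≠ dst ∧ g ∈ X src ∧ Y src = (X src).erase g ∧ Y dst = insert g (X dst) ∧
    ∀ k, k ≠ src → k ≠ dst → Y k = X k

/-- In an orientation of binary-valued items, every agent values her own bundle at its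
cardinality. -/
theorem valFn_own_eq_card {n : ℕ} {G : Type*} {w : Fin n → G → ℝ}
    (hbin : ∀ i g, w i g = 0 ∨ w i g = 1) {X : Fin n → Finset G}
    (horient : IsOrientation w X) (i : Fin n) : valFn w i (X i) = (X i).card := by
  have h1 : ∀ g ∈ X i, w i g = 1 := fun g hg =>
    (hbin i g).resolve_left (horient i g hg).ne'
  simp [valFn, Finset.sum_congr rfl h1]

theorem valFn_le_card {n : ℕ} {G : Type*} {w : Fin n → G → ℝ}
    (hbin : ∀ i g, w i g = 0 ∨ w i g = 1) (i : Fin n) (S : Finset G) :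
    valFn w i S ≤ S.card := by
  have h1 : ∀ g ∈ S, w i g ≤ 1 := fun g _ => by
    rcases hbin i g with h | h <;> simp [h]
  simpa [valFn] using Finset.sum_le_sum h1

/-- For additive binary graphical valuations, in any orientation `X`: if the envy graph of
`X` contains a directed path `p 0, p 1, …, p d` (each agent envying the next), then
`v_{p d} (X (p d)) ≥ v_{p 0} (X (p 0)) + d`. -/
theorem orientation_envy_path
    {n : ℕ} {G : Type*}
    (w : Fin n → G → ℝ) (e₁ e₂ : G → Fin n)
    (hw : ∀ i g, w i g = if i = e₁ g ∨ i = e₂ g then 1 else 0)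
    (X : Fin n → Finset G) (hpart : IsPartition X)
    (horient : IsOrientation w X)
    (d : ℕ) (p : ℕ → Fin n)
    (hpath : ∀ t < d, valFn w (p t) (X (p t)) < valFn w (p t) (X (p (t + 1)))) :
    valFn w (p 0) (X (p 0)) + d ≤ valFn w (p d) (X (p d)) := by
  have hbin : ∀ i g, w i g = 0 ∨ w i g = 1 := fun i g => by
    rw [hw]; split_ifs <;> simp
  have step : ∀ t < d, (X (p t)).card + 1 ≤ (X (p (t + 1))).card := fun t ht => by
    have h := (hpath t ht).trans_le (valFn_le_card hbin _ _)
    rw [valFn_own_eq_card hbin horient] at h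
    exact_mod_cast h
  have grow : ∀ t ≤ d, (X (p 0)).card + t ≤ (X (p t)).card := by
    intro t
    induction t with
    | zero => simp
    | succ t ih =>
      intro ht
      have := ih (by omega)
      have := step t (by omega)
      omega
  rw [valFn_own_eq_card hbin horient, valFn_own_eq_card hbin horient]
  exact_mod_cast grow d le_rfl
end

section
/- Let the agents have additive binary graphical valuations represented by a multigraph on the agent set, and let X be an orientation. Then the envy graph of X is acyclic. -/
/-!
In an orientation every item of `X i` is worth exactly `1` to agent `i`, so `i` values its own
bundle at `#(X i)`, while any bundle `X j` is worth at most `#(X j)` to `i`. Hence envy from `i`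
to `j` forces `#(X i) < #(X j)`: bundle sizes strictly increase along every directed path of the
envy graph (`card_lt_card_of_envy`), which rules out directed cycles.
-/

open Finset

/-- Bundle size is a strict potential for envy. -/
theorem card_lt_card_of_envy
    {n : ℕ} {G : Type*}
    (w : Fin n → G → ℝ) (e₁ e₂ : G → Fin n)
    (hw : ∀ i g, w i g = if i = e₁ g ∨ i = e₂ g then 1 else 0)
    (X : Fin n → Finset G) (horient : IsOrientation w X) {i j : Fin n}
    (h : valFn w i (X i) < valFn w i (X j)) : (X i).card < (X j).card := by
  have own : valFn w i (X i) = (X i).card := by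
    have h1 : ∀ g ∈ X i, w i g = 1 := by
      intro g hg
      have hpos := horient i g hg
      rw [hw] at hpos ⊢
      split_ifs at hpos ⊢ <;> simp_all
    simp [valFn, Finset.sum_congr rfl h1]
  have other : valFn w i (X j) ≤ (X j).card := by
    have h1 : ∀ g ∈ X j, w i g ≤ 1 := by
      intro g _
      rw [hw]
      split_ifs <;> norm_num
    simpa [valFn] using Finset.sum_le_sum h1
  exact_mod_cast own ▸ h.trans_le other

/-- For additive binary graphical valuations, the envy graph of any orientation is acyclic:
there is no directed cycle `p 0, p 1, …, p d = p 0` (with `d ≥ 1`) in which each agent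
envies the next. -/
theorem orientation_envy_graph_acyclic
    {n : ℕ} {G : Type*}
    (w : Fin n → G → ℝ) (e₁ e₂ : G → Fin n)
    (hw : ∀ i g, w i g = if i = e₁ g ∨ i = e₂ g then 1 else 0)
    (X : Fin n → Finset G) (hpart : IsPartition X)
    (horient : IsOrientation w X) :
    ∀ (d : ℕ) (p : ℕ → Fin n), 0 < d →
      (∀ t < d, valFn w (p t) (X (p t)) < valFn w (p t) (X (p (t + 1)))) →
      p 0 ≠ p d := by
  intro d p hd henvy heq
  have increasing : ∀ t, 0 < t → t ≤ d → (X (p 0)).card < (X (p t)).card := by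
    intro t
    induction t with
    | zero => intro h; omega
    | succ k ih =>
      intro _ hk
      have step := card_lt_card_of_envy w e₁ e₂ hw X horient (henvy k hk)
      rcases Nat.eq_zero_or_pos k with rfl | hk0
      · exact step
      · exact (ih hk0 (by omega)).trans step
  have hlt := increasing d hd le_rfl
  rw [← heq] at hlt
  exact lt_irrefl _ hlt
end

section
/- Let the agents have additive binary graphical valuations represented by a multigraph, and let X be a near-EF1 orientation in which agent 1 is the only possibly EF1-unhappy agent. Suppose s is a sink of the envy graph of X, p ≠ 1 is an agent who envies s, and g ∈ X_s is an item with v_p(g) = 1. Let Y be the allocation obtained by transferring g from s to p. Then p is a sink of the envy graph of Y, i.e., p envies no agent in Y. -/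
/-!
Every item is worth at most one to `p`, so EF1-happiness of `p` in `X` means that every bundle
`X j` is worth at most `v_p(X_p) + 1` to `p`. After receiving `g`, agent `p` holds a bundle of
value exactly `v_p(X_p) + 1`, while no other bundle has gained value, so `p` envies nobody.
-/

open Finset

/-- In a near-EF1 orientation `X` with additive binary graphical valuations, let `s` be a
sink of the envy graph, `p ≠ 1` an agent envying `s`, and `g ∈ X s` an item with
`w p g = 1`. After transferring `g` from `s` to `p`, agent `p` is a sink of the envy graph
of the resulting allocation `Y`, i.e. `p` envies no agent in `Y`. -/
theorem orientation_sink_transfer_predecessor_sink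
    {n : ℕ} {G : Type*} [DecidableEq G]
    (w : Fin n → G → ℝ) (e₁ e₂ : G → Fin n)
    (hw : ∀ i g, w i g = if i = e₁ g ∨ i = e₂ g then 1 else 0)
    (a1 : Fin n) (ha1 : (a1 : ℕ) = 0)
    (X : Fin n → Finset G) (hpart : IsPartition X)
    (horient : IsOrientation w X)
    (hnear : NearEF1 (valFn w) X a1)
    (s : Fin n) (hsink : ∀ j, ¬ (valFn w s (X s) < valFn w s (X j)))
    (p : Fin n) (hp1 : p ≠ a1) (hp : valFn w p (X p) < valFn w p (X s))
    (g : G) (hg : g ∈ X s) (hpg : w p g = 1)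
    (Y : Fin n → Finset G)
    (hY : Y = fun k => if k = s then (X s).erase g
                       else if k = p then insert g (X p) else X k) :
    ∀ j, ¬ (valFn w p (Y p) < valFn w p (Y j)) := by
  have hw0 : ∀ x, 0 ≤ w p x := fun x => by rw [hw]; split_ifs <;> norm_num
  have hw1 : ∀ x, w p x ≤ 1 := fun x => by rw [hw]; split_ifs <;> norm_num
  have herase : ∀ (S : Finset G) (x : G), x ∈ S →
      valFn w p (S.erase x) + w p x = valFn w p S :=
    fun S x hx => Finset.sum_erase_add S (w p) hx
  have hbound : ∀ j, valFn w p (X j) ≤ valFn w p (X p) + 1 := by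
    intro j
    by_contra! hlt
    exact hnear p hp1 j ⟨by linarith, fun x hx => by linarith [herase (X j) x hx, hw1 x]⟩
  have hps : p ≠ s := by
    rintro rfl
    exact lt_irrefl _ hp
  have hgp : g ∉ X p := fun h => hps ((hpart g).unique h hg)
  have hYp : valFn w p (Y p) = valFn w p (X p) + 1 := by
    simp only [hY, if_neg hps, if_true, valFn, Finset.sum_insert hgp, hpg]
    ring
  intro j
  rw [not_lt]
  by_cases hjp : j = p
  · rw [hjp]
  rw [hYp]
  by_cases hjs : j = s
  · simp only [hY, if_pos hjs]
    linarith [herase (X s) g hg, hw0 g, hbound s]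
  · simpa only [hY, if_neg hjs, if_neg hjp] using hbound j
end

section
/- In the n-agent instance witnessing the lower bound (valuations: for i ≠ n, v_i(g) = 1 iff g ∈ X_i ∪ X_{i+1}, and v_n(g) = 1 iff g ∈ X_n, with |X_1| = 1 and |X_i| = i + 1 for i ≠ 1), the envy graph of X consists of a single directed envy path with agent 1 as its source and agent n as its sink, X is a near-EF1 orientation, and agent 1 EF1-envies exactly agent 2 with ε_{1→2}(X) = 1. -/
/-!
Every item has one owner, so agent `a` values an item of `X b` at 1 when `b = a` or `b` is the
successor of `a`, and at 0 otherwise. Hence on subsets of `X b` the valuation of `a` is either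
cardinality or zero (`valFn_of_subset`), and every claim is a comparison of bundle sizes: the
sizes along the path are `1, 3, 4, 5, …`. The jump of 2 from agent 1 to agent 2 gives the EF1-envy
of amount 1, and the later jumps of 1 give envy that removing one item eliminates.
-/

open Finset

/-- The owner of an item determines its value for each agent. The last agent has no successor, so
its valuation, given separately, fits the same formula. -/
lemma weight_of_mem {G : Type*} [DecidableEq G] {n : ℕ}
    {X : Fin n → Finset G} (hpart : IsPartition X)
    {alast : Fin n} (halast : (alast : ℕ) = n - 1) {w : Fin n → G → ℝ}
    (hw : ∀ a b : Fin n, (b : ℕ) = (a : ℕ) + 1 →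
      ∀ g, w a g = if g ∈ X a ∪ X b then 1 else 0)
    (hwlast : ∀ g, w alast g = if g ∈ X alast then 1 else 0)
    (a b : Fin n) {g : G} (hg : g ∈ X b) :
    w a g = if b = a ∨ (b : ℕ) = (a : ℕ) + 1 then 1 else 0 := by
  have owner : ∀ c, g ∈ X c ↔ b = c := fun c =>
    ⟨fun h => (hpart g).unique hg h, fun h => h ▸ hg⟩
  by_cases ha : (a : ℕ) + 1 < n
  · rw [hw a ⟨a + 1, ha⟩ rfl g]
    simp only [Finset.mem_union, owner, Fin.ext_iff]
  · obtain rfl : a = alast := Fin.ext (by omega)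
    have hb : ¬ (b : ℕ) = (a : ℕ) + 1 := by omega
    rw [hwlast g]
    simp only [owner, hb, or_false]

lemma valFn_of_subset {G : Type*} [DecidableEq G] {n : ℕ}
    {X : Fin n → Finset G} (hpart : IsPartition X)
    {alast : Fin n} (halast : (alast : ℕ) = n - 1) {w : Fin n → G → ℝ}
    (hw : ∀ a b : Fin n, (b : ℕ) = (a : ℕ) + 1 →
      ∀ g, w a g = if g ∈ X a ∪ X b then 1 else 0)
    (hwlast : ∀ g, w alast g = if g ∈ X alast then 1 else 0)
    (a b : Fin n) {S : Finset G} (hS : S ⊆ X b) :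
    valFn w a S = ((if b = a ∨ (b : ℕ) = (a : ℕ) + 1 then S.card else 0 : ℕ) : ℝ) := by
  unfold valFn
  rw [Finset.sum_congr rfl fun g hg =>
    weight_of_mem hpart halast hw hwlast a b (hS hg)]
  split_ifs <;> simp

/-- Properties of the lower-bound instance: agents `1, …, n` (indexed by `Fin n`, agent `i`
having index `i - 1`), `|X 1| = 1` and `|X i| = i + 1` for `i ≠ 1`; for `i ≠ n` agent `i`
values an item at 1 iff it lies in `X i ∪ X (i+1)`, and agent `n` values an item at 1 iff
it lies in `X n`. Then the envy graph of `X` is exactly the single directed path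
`1 → 2 → ⋯ → n` (so agent 1 is its source and agent `n` its sink), `X` is a near-EF1
orientation, and agent 1 EF1-envies exactly agent 2, with `ε_{1→2}(X) = 1`. -/
theorem lower_bound_instance_properties
    {G : Type*} [DecidableEq G] {n : ℕ} (hn : 2 ≤ n)
    (X : Fin n → Finset G) (hpart : IsPartition X)
    (a1 a2 alast : Fin n)
    (ha1 : (a1 : ℕ) = 0) (ha2 : (a2 : ℕ) = 1) (halast : (alast : ℕ) = n - 1)
    (hcard1 : (X a1).card = 1)
    (hcards : ∀ a, a ≠ a1 → (X a).card = (a : ℕ) + 2)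
    (w : Fin n → G → ℝ)
    (hw : ∀ a b : Fin n, (b : ℕ) = (a : ℕ) + 1 →
      ∀ g, w a g = if g ∈ X a ∪ X b then 1 else 0)
    (hwlast : ∀ g, w alast g = if g ∈ X alast then 1 else 0) :
    (∀ a b : Fin n, (valFn w a (X a) < valFn w a (X b)) ↔ (b : ℕ) = (a : ℕ) + 1) ∧
    IsOrientation w X ∧
    NearEF1 (valFn w) X a1 ∧
    (∀ j, EF1Envies (valFn w) X a1 j ↔ j = a2) ∧
    eps (valFn w) X a1 a2 = 1 := by
  have val := fun a b (S : Finset G) (hS : S ⊆ X b) =>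
    valFn_of_subset hpart halast hw hwlast a b hS
  have own : ∀ a, valFn w a (X a) = ((X a).card : ℝ) := fun a => by
    simpa using val a a (X a) subset_rfl
  have env : ∀ a b : Fin n,
      (valFn w a (X a) < valFn w a (X b)) ↔ (b : ℕ) = (a : ℕ) + 1 := by
    intro a b
    rw [own, val a b (X b) subset_rfl, Nat.cast_lt]
    constructor
    · intro h
      split_ifs at h with hc
      · rcases hc with rfl | hc
        · exact absurd h (lt_irrefl _)
        · exact hc
      · exact absurd h (Nat.not_lt_zero _)
    · intro h
      have hb := hcards b (fun e => by rw [e] at h; omega)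
      rw [if_pos (Or.inr h), hb]
      by_cases ha : a = a1
      · rw [ha, hcard1]; omega
      · rw [hcards a ha]; omega
  have ha12 : (a2 : ℕ) = (a1 : ℕ) + 1 := by omega
  have hcard2 : (X a2).card = 3 := by
    rw [hcards a2 (fun e => by rw [e] at ha2; omega), ha2]
  have erase2 : ∀ g ∈ X a2, valFn w a1 ((X a2).erase g) = 2 := by
    intro g hg
    rw [val a1 a2 _ (Finset.erase_subset g _), if_pos (Or.inr ha12),
      Finset.card_erase_of_mem hg, hcard2]
    norm_num
  refine ⟨env, ?_, ?_, ?_, ?_⟩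
  · intro i g hg
    rw [weight_of_mem hpart halast hw hwlast i i hg]
    simp
  · rintro i hi j ⟨h1, h2⟩
    have hj := (env i j).1 h1
    have hcj := hcards j (fun e => by rw [e] at hj; omega)
    obtain ⟨g, hg⟩ := Finset.card_pos.1 (by omega : 0 < (X j).card)
    have h := h2 g hg
    rw [own, val i j _ (Finset.erase_subset g _), if_pos (Or.inr hj), Nat.cast_lt,
      Finset.card_erase_of_mem hg, hcj, hcards i hi] at h
    omega
  · intro j
    constructor
    · rintro ⟨h1, -⟩
      have hj := (env a1 j).1 h1
      exact Fin.ext (by omega)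
    · rintro rfl
      refine ⟨(env a1 j).2 ha12, fun g hg => ?_⟩
      rw [own, hcard1, erase2 g hg]
      norm_num
  · have hne : (X a2).Nonempty := Finset.card_pos.1 (by omega)
    unfold eps
    rw [dif_pos hne, Finset.inf'_congr hne rfl erase2, Finset.inf'_const, own, hcard1]
    norm_num
end

section
/- For all n and m with n dividing m − n, there exists a fair division instance with n agents and m goods, an identical additive valuation v with v(g) = 1 for m − n of the goods and v(g) = m − n + 1 for the remaining n goods, and a near-EFX allocation X with X_1 consisting of all m − n goods of value 1, X_2 consisting of two goods of value m − n + 1, and each other agent holding one good of value m − n + 1, such that any sequence of single-item transfers from X ending at an EFX allocation requires at least (n − 1)·(m − n)/n transfers. -/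
/-!
The instance: goods with index `< n` are big (value `m - n + 1`), the others are small (value `1`).
All small goods together are worth less than one big good. Hence in an EFX allocation no agent is
without a big good: by pigeonhole another agent would hold two, and would keep a whole big good
after losing the other. So all `n` agents hold exactly one big good each (`efx_big_card_eq_one`).
Removing a small good from a bundle then shows that the numbers of small goods of two agents differ
by at most one. As these numbers add up to `n * k` with `k = (m - n) / n`, nobody holds more than
`k` small goods (`efx_small_card_le`). Agent `0 : Fin n` starts with all `n * k` small goods and
loses at most one per transfer (`small_card_add_ge`), so at least `(n - 1) * k` transfers are
needed.
-/

open Finset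

/-- Agent `i` EFX-envies agent `j`: there is an item of `X j` whose removal still leaves
`j`'s bundle strictly more valuable (to `i`) than `X i`. -/
def EFXEnvies {G : Type*} [DecidableEq G] {n : ℕ} (v : Finset G → ℝ)
    (X : Fin n → Finset G) (i j : Fin n) : Prop :=
  ∃ g ∈ X j, v (X i) < v ((X j).erase g)

/-- `X` is near-EFX with agent `a1` the only possibly EFX-unhappy agent. -/
def NearEFX {G : Type*} [DecidableEq G] {n : ℕ} (v : Finset G → ℝ)
    (X : Fin n → Finset G) (a1 : Fin n) : Prop :=
  ∀ i, i ≠ a1 → ∀ j, ¬ EFXEnvies v X i j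

/-- `X` is an EFX allocation: no agent EFX-envies another. -/
def IsEFX {G : Type*} [DecidableEq G] {n : ℕ} (v : Finset G → ℝ)
    (X : Fin n → Finset G) : Prop :=
  ∀ i j, ¬ EFXEnvies v X i j

/-- The owner function of a partition. -/
lemma IsPartition.exists_owner {G : Type*} {n : ℕ} {X : Fin n → Finset G}
    (h : IsPartition X) : ∃ f : G → Fin n, ∀ g i, g ∈ X i ↔ f g = i := by
  choose f hf hu using h
  refine ⟨f, fun g i => ⟨fun hg => (hu g i hg).symm, ?_⟩⟩
  rintro rfl
  exact hf g

lemma TransferStep.isPartition {G : Type*} [DecidableEq G] {n : ℕ} {X Y : Fin n → Finset G}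
    {src dst : Fin n} {g : G} (h : TransferStep X Y src dst g) (hX : IsPartition X) :
    IsPartition Y := by
  obtain ⟨f, hf⟩ := hX.exists_owner
  obtain ⟨hne, hg, hs, hd, hk⟩ := h
  have key : ∀ x i, x ∈ Y i ↔ Function.update f g dst x = i := by
    intro x i
    have hfg := (hf g src).1 hg
    by_cases h1 : i = src
    · subst h1
      rw [hs, mem_erase, hf, Function.update_apply]
      grind
    · by_cases h2 : i = dst
      · subst h2
        rw [hd, mem_insert, hf, Function.update_apply]
        grind
      · rw [hk i h1 h2, hf, Function.update_apply]
        grind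
  intro x
  exact ⟨_, (key x _).2 rfl, fun i hi => ((key x i).1 hi).symm⟩

/-- The goods of `B` are distributed completely among the bundles of a partition. -/
lemma IsPartition.sum_card_inter {G : Type*} [DecidableEq G] {n : ℕ}
    {X : Fin n → Finset G} (hX : IsPartition X) (B : Finset G) :
    ∑ i, (X i ∩ B).card = B.card := by
  obtain ⟨f, hf⟩ := hX.exists_owner
  rw [card_eq_sum_card_fiberwise (f := f) (t := univ) (fun _ _ => mem_coe.2 (mem_univ _))]
  refine sum_congr rfl fun i _ => congrArg card ?_
  ext x
  simp only [mem_inter, mem_filter, hf]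
  tauto

/-- A bundle loses at most one item of `C` per transfer. -/
lemma TransferStep.card_inter_le {G : Type*} [DecidableEq G] {n : ℕ} {X Y : Fin n → Finset G}
    {src dst : Fin n} {g : G} (h : TransferStep X Y src dst g) (C : Finset G) (i : Fin n) :
    (X i ∩ C).card ≤ (Y i ∩ C).card + 1 := by
  obtain ⟨hne, hg, hs, hd, hk⟩ := h
  have hsub : X i ∩ C ⊆ insert g (Y i ∩ C) := by
    intro x hx
    by_cases h1 : i = src
    · subst h1
      rw [hs]; grind
    · by_cases h2 : i = dst
      · subst h2
        rw [hd]; grind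
      · rw [hk i h1 h2]; grind
  exact (card_le_card hsub).trans (card_insert_le _ _)

/-- After `t` transfers, a bundle has lost at most `t` of its items in `C`. -/
lemma small_card_add_ge {G : Type*} [DecidableEq G] {n T : ℕ}
    {A : ℕ → Fin n → Finset G} {src dst : ℕ → Fin n} {gs : ℕ → G}
    (h : ∀ t < T, TransferStep (A t) (A (t + 1)) (src t) (dst t) (gs t))
    (hA : IsPartition (A 0)) (C : Finset G) (i : Fin n) :
    ∀ t ≤ T, IsPartition (A t) ∧ (A 0 i ∩ C).card ≤ (A t i ∩ C).card + t := by
  intro t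
  induction t with
  | zero => exact fun _ => ⟨hA, le_rfl⟩
  | succ t ih =>
    intro ht
    obtain ⟨h1, h2⟩ := ih (by omega)
    have h3 := h t (by omega)
    exact ⟨h3.isPartition h1, by have := h3.card_inter_le C i; omega⟩

lemma sum_two_valued {G : Type*} [Fintype G] [DecidableEq G] {w : G → ℝ} {B : Finset G} {b : ℝ}
    (hB : ∀ g ∈ B, w g = b) (hS : ∀ g ∉ B, w g = 1) (S : Finset G) :
    ∑ g ∈ S, w g = (S ∩ B).card * b + (S ∩ Bᶜ).card := by
  have h1 : ∑ g ∈ S ∩ B, w g = (S ∩ B).card * b := by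
    rw [sum_congr rfl fun g hg => hB g (mem_inter.1 hg).2, sum_const, nsmul_eq_mul]
  have h2 : ∑ g ∈ S ∩ Bᶜ, w g = (S ∩ Bᶜ).card := by
    rw [sum_congr rfl fun g hg => hS g (mem_compl.1 (mem_inter.1 hg).2), sum_const, nsmul_eq_mul,
      mul_one]
  rw [← h1, ← h2, ← sdiff_eq_inter_compl, sum_inter_add_sum_sdiff]

/-- If there are as many big goods as agents, and one big good outweighs all small goods, then
in an EFX allocation every agent gets exactly one big good. -/
lemma efx_big_card_eq_one {G : Type*} [Fintype G] [DecidableEq G] {n : ℕ} {w : G → ℝ}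
    {B : Finset G} (hBn : B.card = n) (hB : ∀ g ∈ B, w g = (Bᶜ.card : ℝ) + 1)
    (hS : ∀ g ∉ B, w g = 1) {X : Fin n → Finset G} (hX : IsPartition X)
    (hE : IsEFX (fun S => ∑ g ∈ S, w g) X) (i : Fin n) : (X i ∩ B).card = 1 := by
  have hsum := hX.sum_card_inter B
  have hsum1 : ∑ _i : Fin n, 1 = n := by simp
  have hpos : ∀ i, 1 ≤ (X i ∩ B).card := by
    by_contra! hcon
    obtain ⟨i, hi⟩ := hcon
    obtain ⟨j, hj⟩ : ∃ j, 2 ≤ (X j ∩ B).card := by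
      by_contra! hlt
      have : ∑ i, (X i ∩ B).card < ∑ _i : Fin n, 1 :=
        sum_lt_sum (fun j _ => by have := hlt j; omega) ⟨i, mem_univ _, hi⟩
      omega
    obtain ⟨g, hg, g', hg', hne⟩ := one_lt_card.1 hj
    rw [mem_inter] at hg hg'
    refine hE i j ⟨g, hg.1, ?_⟩
    have hsmall : ((X i ∩ Bᶜ).card : ℝ) ≤ Bᶜ.card := by
      exact_mod_cast card_le_card inter_subset_right
    have hle : w g' ≤ ∑ x ∈ (X j).erase g, w x := by
      refine single_le_sum (fun x _ => ?_) (mem_erase.2 ⟨hne.symm, hg'.1⟩)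
      by_cases hx : x ∈ B
      · rw [hB x hx]; positivity
      · rw [hS x hx]; norm_num
    have h0 : (X i ∩ B).card = 0 := by omega
    rw [hB g' hg'.2] at hle
    simp only [sum_two_valued hB hS (X i), h0]
    push_cast
    linarith
  have heq := (sum_eq_sum_iff_of_le (s := univ) (f := fun _ : Fin n => 1)
    (g := fun i => (X i ∩ B).card) fun i _ => hpos i).1 (by omega)
  exact (heq i (mem_univ _)).symm

/-- In an EFX allocation with `n * k` small goods, no agent gets more than `k` small goods. -/
lemma efx_small_card_le {G : Type*} [Fintype G] [DecidableEq G] {n k : ℕ} {w : G → ℝ}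
    {B : Finset G} (hBn : B.card = n) (hk : Bᶜ.card = n * k)
    (hB : ∀ g ∈ B, w g = (Bᶜ.card : ℝ) + 1)
    (hS : ∀ g ∉ B, w g = 1) {X : Fin n → Finset G} (hX : IsPartition X)
    (hE : IsEFX (fun S => ∑ g ∈ S, w g) X) (i : Fin n) : (X i ∩ Bᶜ).card ≤ k := by
  have hone := efx_big_card_eq_one hBn hB hS hX hE
  by_contra! hlt
  obtain ⟨g, hg⟩ : (X i ∩ Bᶜ).Nonempty := card_pos.1 (by omega)
  rw [mem_inter, mem_compl] at hg
  have hge : ∀ j, k ≤ (X j ∩ Bᶜ).card := by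
    intro j
    have hn := hE j i
    simp only [EFXEnvies, not_exists, not_and, not_lt] at hn
    have h1 := hn g hg.1
    rw [sum_erase_eq_sub hg.1, hS g hg.2, sum_two_valued hB hS, sum_two_valued hB hS, hone, hone]
      at h1
    have h2 : ((X i ∩ Bᶜ).card : ℝ) ≤ ((X j ∩ Bᶜ).card + 1 : ℕ) := by push_cast; linarith
    have h3 : (X i ∩ Bᶜ).card ≤ (X j ∩ Bᶜ).card + 1 := by exact_mod_cast h2
    omega
  have hsum := hX.sum_card_inter Bᶜ
  have : ∑ _j : Fin n, k < ∑ j, (X j ∩ Bᶜ).card :=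
    sum_lt_sum (fun j _ => hge j) ⟨i, mem_univ _, hlt⟩
  simp at this
  omega

/-- The initial allocation, with the set `B` of big goods. -/
lemma exists_initial_allocation (n m : ℕ) (hn : 2 ≤ n) (hm : n ≤ m) :
    ∃ (B : Finset (Fin m)) (X : Fin n → Finset (Fin m)) (a1 a2 : Fin n),
      B.card = n ∧ (a1 : ℕ) = 0 ∧ (a2 : ℕ) = 1 ∧ IsPartition X ∧ X a1 = Bᶜ ∧
        X a2 ⊆ B ∧ (X a2).card = 2 ∧ ∀ i, i ≠ a1 → i ≠ a2 → X i ⊆ B ∧ (X i).card = 1 := by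
  -- Good `0` goes to agent `1` next to good `1`; this frees agent `0` for the small goods.
  let own : Fin m → Fin n := fun g =>
    if h : (g : ℕ) < n then (if (g : ℕ) = 0 then ⟨1, by omega⟩ else ⟨g, h⟩) else ⟨0, by omega⟩
  let B : Finset (Fin m) := univ.filter fun g => (g : ℕ) < n
  have hBn : B.card = n := by
    have : B = univ.image (Fin.castLE hm) := by
      ext x
      simp only [B, mem_filter, mem_univ, true_and, mem_image]
      exact ⟨fun h => ⟨⟨x, h⟩, rfl⟩, by rintro ⟨y, rfl⟩; exact y.2⟩
    rw [this, card_image_of_injective _ (Fin.castLE_injective hm), card_univ, Fintype.card_fin]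
  let X : Fin n → Finset (Fin m) := fun i => univ.filter fun g => own g = i
  have hXm : ∀ g i, g ∈ X i ↔ own g = i := by simp [X]
  have hXp : IsPartition X := fun g => ⟨own g, (hXm _ _).2 rfl, fun i hi => ((hXm _ _).1 hi).symm⟩
  have hX0 : X ⟨0, by omega⟩ = Bᶜ := by
    ext g
    rw [hXm]
    simp only [own, B, mem_compl, mem_filter, mem_univ, true_and]
    split_ifs <;> simp_all
  have hX1 : X ⟨1, by omega⟩ = {⟨0, by omega⟩, ⟨1, by omega⟩} := by
    ext g
    rw [hXm]
    simp only [own, mem_insert, mem_singleton, Fin.ext_iff]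
    split_ifs <;> simp_all <;> omega
  have hXi : ∀ i : Fin n, i ≠ ⟨0, by omega⟩ → i ≠ ⟨1, by omega⟩ → X i = {Fin.castLE hm i} := by
    intro i h0 h1
    ext g
    rw [hXm]
    have := i.2
    simp only [ne_eq, Fin.ext_iff] at h0 h1
    simp only [own, mem_singleton, Fin.ext_iff, Fin.val_castLE]
    split_ifs <;> simp_all <;> omega
  have hs1 : X ⟨1, by omega⟩ ⊆ B := by
    rw [hX1]
    intro g hg
    simp only [mem_insert, mem_singleton] at hg
    simp only [B, mem_filter, mem_univ, true_and]
    rcases hg with rfl | rfl <;> simp <;> omega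
  have hc1 : (X ⟨1, by omega⟩).card = 2 := by
    rw [hX1]
    exact card_pair (by simp)
  have hsi : ∀ i : Fin n, i ≠ ⟨0, by omega⟩ → i ≠ ⟨1, by omega⟩ →
      X i ⊆ B ∧ (X i).card = 1 := by
    intro i h0 h1
    rw [hXi i h0 h1]
    simp [B]
  exact ⟨B, X, ⟨0, by omega⟩, ⟨1, by omega⟩, hBn, rfl, rfl, hXp, hX0, hs1, hc1, hsi⟩

lemma nearEFX_initial {G : Type*} [Fintype G] [DecidableEq G] {n : ℕ} {w : G → ℝ}
    {B : Finset G} (hw1 : ∀ g ∈ B, w g = (Bᶜ.card : ℝ) + 1) (hw2 : ∀ g ∉ B, w g = 1)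
    {X : Fin n → Finset G} {a1 a2 : Fin n} (hX0 : X a1 = Bᶜ) (hs1 : X a2 ⊆ B)
    (hc1 : (X a2).card = 2) (hsi : ∀ i, i ≠ a1 → i ≠ a2 → X i ⊆ B ∧ (X i).card = 1) :
    NearEFX (fun S => ∑ g ∈ S, w g) X a1 := by
  -- Every agent but `a1` has at least one big good, while every bundle is worth at most one
  -- big good after removal of an item.
  rintro i hi j ⟨g, hg, hlt⟩
  have hall : ∀ S : Finset G, S ⊆ B → ∑ x ∈ S, w x = S.card * ((Bᶜ.card : ℝ) + 1) := by
    intro S hS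
    rw [sum_congr rfl fun x hx => hw1 x (hS hx), sum_const, nsmul_eq_mul]
  have hge : (Bᶜ.card : ℝ) + 1 ≤ ∑ x ∈ X i, w x := by
    have hpos : (0 : ℝ) ≤ Bᶜ.card := by positivity
    by_cases h1 : i = a2
    · rw [h1, hall _ hs1, hc1]; push_cast; linarith
    · rw [hall _ (hsi i hi h1).1, (hsi i hi h1).2]; simp
  have hle : ∑ x ∈ (X j).erase g, w x ≤ (Bᶜ.card : ℝ) + 1 := by
    by_cases h0 : j = a1
    · rw [h0, hX0] at hg ⊢
      rw [sum_erase_eq_sub hg, hw2 g (mem_compl.1 hg),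
        sum_congr rfl fun x hx => hw2 x (mem_compl.1 hx), sum_const, nsmul_eq_mul]
      linarith
    · have hsub : X j ⊆ B ∧ (X j).card ≤ 2 := by
        by_cases h1 : j = a2
        · rw [h1]; exact ⟨hs1, hc1.le⟩
        · exact ⟨(hsi j h0 h1).1, by rw [(hsi j h0 h1).2]; omega⟩
      rw [hall _ ((erase_subset _ _).trans hsub.1)]
      have hc : ((X j).erase g).card ≤ 1 := by rw [card_erase_of_mem hg]; omega
      have hc' : (((X j).erase g).card : ℝ) ≤ 1 := by exact_mod_cast hc
      exact mul_le_of_le_one_left (by positivity) hc'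
  exact absurd hlt (not_lt.2 (hle.trans hge))

/-- For all `n`, `m` (with `2 ≤ n ≤ m` and `n ∣ m - n`) there is an instance with `n`
agents, `m` goods (of which `m - n` have value `1` and the remaining `n` have value
`m - n + 1`, under an identical additive valuation) and a near-EFX allocation `X` in which
agent 1 holds all the goods of value `1`, agent 2 holds two goods of value `m - n + 1`,
and every other agent holds one good of value `m - n + 1`, such that any sequence of
single-item transfers from `X` ending at an EFX allocation requires at least
`(n - 1)·(m - n)/n` transfers. -/
theorem efx_restoration_many_transfers
    (n m : ℕ) (hn : 2 ≤ n) (hm : n ≤ m) (hdvd : n ∣ m - n) :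
    ∃ (w : Fin m → ℝ) (B : Finset (Fin m)),
      B.card = n ∧
      (∀ g ∈ B, w g = (m : ℝ) - n + 1) ∧
      (∀ g ∉ B, w g = 1) ∧
      ∃ (X : Fin n → Finset (Fin m)) (a1 a2 : Fin n),
        (a1 : ℕ) = 0 ∧ (a2 : ℕ) = 1 ∧
        IsPartition X ∧
        X a1 = Bᶜ ∧
        X a2 ⊆ B ∧ (X a2).card = 2 ∧
        (∀ i, i ≠ a1 → i ≠ a2 → X i ⊆ B ∧ (X i).card = 1) ∧
        NearEFX (fun S => ∑ g ∈ S, w g) X a1 ∧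
        ∀ (T : ℕ) (A : ℕ → Fin n → Finset (Fin m))
          (src dst : ℕ → Fin n) (gs : ℕ → Fin m),
          A 0 = X →
          (∀ t < T, TransferStep (A t) (A (t + 1)) (src t) (dst t) (gs t)) →
          IsEFX (fun S => ∑ g ∈ S, w g) (A T) →
          (n - 1) * ((m - n) / n) ≤ T := by
  obtain ⟨B, X, a1, a2, hBn, ha1, ha2, hXp, hX0, hs1, hc1, hsi⟩ :=
    exists_initial_allocation n m hn hm
  have hBc : Bᶜ.card = m - n := by rw [card_compl, hBn, Fintype.card_fin]
  have hBr : (Bᶜ.card : ℝ) = m - n := by rw [hBc, Nat.cast_sub hm]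
  obtain ⟨w, hw1, hw2⟩ : ∃ w : Fin m → ℝ,
      (∀ g ∈ B, w g = (Bᶜ.card : ℝ) + 1) ∧ ∀ g ∉ B, w g = 1 :=
    ⟨fun g => if g ∈ B then (Bᶜ.card : ℝ) + 1 else 1, fun g hg => if_pos hg,
      fun g hg => if_neg hg⟩
  refine ⟨w, B, hBn, fun g hg => by rw [hw1 g hg, hBr], hw2, X, a1, a2, ha1, ha2, hXp, hX0, hs1,
    hc1, hsi, nearEFX_initial hw1 hw2 hX0 hs1 hc1 hsi, ?_⟩
  intro T A src dst gs hA0 hstep hE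
  obtain ⟨k, hk⟩ := hdvd
  obtain ⟨hP, hT⟩ := small_card_add_ge hstep (hA0 ▸ hXp) Bᶜ a1 T le_rfl
  have hfin := efx_small_card_le hBn (hBc.trans hk) hw1 hw2 hP hE a1
  rw [hA0, hX0, inter_self, hBc, hk] at hT
  rw [hk, Nat.mul_div_cancel_left k (by omega), Nat.sub_mul]
  omega
end
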